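/- Let α, β, γ ∈ ℂ with α+β ∉ ℤ and γ ∉ ℤ, and let X, Y, Z be nonnegative integers. Then ∑ (−1)^{i+j+k+l+m} · ((β)_n (α+β−γ)_n / (n! (α+β)_n)) · C(β−γ, i) · C(−β−n, j) · C(α+β+n−1, k) · C(γ−α−β−n, l) · C(n, m) = (α)_X (β)_Y (1−γ)_Z (γ)_{X+Y−Z} / (X! · Y! · Z! · (α+β)_{X+Y−Z}), where the (finite) sum ranges over all nonnegative integers i, j, k, l, m, n satisfying i+l+n−m = X, j+m = Y and k+l = Z. -/

import Mathlib

open Finset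

/-- Pochhammer symbol `(a)_k` for complex `a` and integer `k`. -/
noncomputable def cpoch (a : ℂ) (k : ℤ) : ℂ :=
  if 0 ≤ k then ∏ i ∈ Finset.range k.toNat, (a + (i : ℂ))
  else (∏ i ∈ Finset.range (-k).toNat, (a + (k : ℂ) + (i : ℂ)))⁻¹

/-- Generalized binomial coefficient `C(a, r) = a(a-1)⋯(a-r+1)/r!`. -/
noncomputable def genBinom (a : ℂ) (r : ℕ) : ℂ :=
  (∏ i ∈ Finset.range r, (a - (i : ℂ))) / (r.factorial : ℂ)

/-- Rising factorial with natural index. -/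
noncomputable def rf (a : ℂ) (n : ℕ) : ℂ := ∏ i ∈ Finset.range n, (a + (i : ℂ))

lemma rf_zero (a : ℂ) : rf a 0 = 1 := by simp [rf]

lemma rf_succ (a : ℂ) (n : ℕ) : rf a (n + 1) = rf a n * (a + n) := by
  simp [rf, Finset.prod_range_succ]

lemma rf_succ' (a : ℂ) (n : ℕ) : rf a (n + 1) = a * rf (a + 1) n := by
  simp only [rf, Finset.prod_range_succ']
  rw [mul_comm]
  congr 1
  · simp
  · refine Finset.prod_congr rfl fun i _ => ?_
    push_cast; ring

lemma rf_add (a : ℂ) (m n : ℕ) : rf a (m + n) = rf a m * rf (a + m) n := by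
  simp only [rf, Finset.prod_range_add]
  congr 1
  refine Finset.prod_congr rfl fun i _ => ?_
  push_cast; ring

lemma rf_reflect (a : ℂ) (n : ℕ) : (-1) ^ n * rf (a - n) n = rf (1 - a) n := by
  induction n with
  | zero => simp [rf_zero]
  | succ n ih =>
    rw [rf_succ', rf_succ (1 - a), ← ih]
    push_cast
    rw [show a - ((n : ℂ) + 1) + 1 = a - n by ring]
    ring

lemma genBinom_neg (a : ℂ) (r : ℕ) : (-1) ^ r * genBinom a r = rf (-a) r / (r.factorial : ℂ) := by
  unfold genBinom rf
  rw [← mul_div_assoc]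
  congr 1
  have : (-1 : ℂ) ^ r = ∏ i ∈ Finset.range r, (-1 : ℂ) := by simp
  rw [this, ← Finset.prod_mul_distrib]
  refine Finset.prod_congr rfl fun i _ => ?_
  ring

lemma genBinom_rf (a : ℂ) (r : ℕ) : genBinom a r = rf (a + 1 - r) r / (r.factorial : ℂ) := by
  have h := genBinom_neg a r
  have h2 := rf_reflect (a + 1) r
  rw [show 1 - (a + 1) = -a by ring] at h2
  rw [← h2, mul_div_assoc] at h
  exact mul_left_cancel₀ (pow_ne_zero r (by norm_num)) h

lemma genBinom_zero_of_lt {n m : ℕ} (h : n < m) : genBinom (n : ℂ) m = 0 := by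
  unfold genBinom
  rw [Finset.prod_eq_zero (Finset.mem_range.2 h) (by ring)]
  simp

lemma rf_fact (p m : ℕ) : (p.factorial : ℂ) * rf (p + 1) m = ((p + m).factorial : ℂ) := by
  induction m with
  | zero => simp [rf_zero]
  | succ m ih =>
    rw [rf_succ, ← mul_assoc, ih, ← add_assoc, Nat.factorial_succ]
    push_cast; ring

lemma fact_ne (n : ℕ) : (n.factorial : ℂ) ≠ 0 := by exact_mod_cast n.factorial_ne_zero

lemma genBinom_nat (p m : ℕ) : genBinom ((p + m : ℕ) : ℂ) m =
    ((p + m).factorial : ℂ) / ((p.factorial : ℂ) * (m.factorial : ℂ)) := by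
  rw [genBinom_rf, ← rf_fact]
  have := fact_ne p
  have := fact_ne m
  rw [show ((p + m : ℕ) : ℂ) + 1 - m = p + 1 by push_cast; ring]
  field_simp

lemma cpoch_nat (a : ℂ) (n : ℕ) : cpoch a (n : ℤ) = rf a n := by
  simp [cpoch, rf]

lemma cpoch_neg (a : ℂ) (n : ℕ) : cpoch a (-(n : ℤ)) = (rf (a - n) n)⁻¹ := by
  rcases Nat.eq_zero_or_pos n with h | h
  · subst h; simp [cpoch, rf]
  · have : ¬ (0 ≤ -(n : ℤ)) := by omega
    simp only [cpoch, if_neg this, rf]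
    simp [sub_eq_add_neg]

lemma rf_ne {c : ℂ} (hc : ∀ n : ℤ, c ≠ (n : ℂ)) (k : ℤ) (n : ℕ) : rf (c + k) n ≠ 0 := by
  unfold rf
  refine Finset.prod_ne_zero_iff.2 fun i _ h => ?_
  apply hc (-k - i)
  push_cast
  linear_combination h

lemma cpoch_ne {c : ℂ} (hc : ∀ n : ℤ, c ≠ (n : ℂ)) (k : ℤ) : cpoch c k ≠ 0 := by
  obtain ⟨n, rfl | rfl⟩ := k.eq_nat_or_neg
  · rw [cpoch_nat]; simpa using rf_ne hc 0 n
  · rw [cpoch_neg]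
    have := rf_ne hc (-n) n
    push_cast at this
    rw [← sub_eq_add_neg] at this
    exact inv_ne_zero this

lemma cpoch_succ {c : ℂ} (hc : ∀ n : ℤ, c ≠ (n : ℂ)) (k : ℤ) :
    cpoch c (k + 1) = cpoch c k * (c + k) := by
  by_cases h : 0 ≤ k
  · obtain ⟨n, rfl⟩ := Int.eq_ofNat_of_zero_le h
    have : ((n : ℤ) + 1) = ((n + 1 : ℕ) : ℤ) := by push_cast; ring
    rw [this, cpoch_nat, cpoch_nat, rf_succ]; simp
  · obtain ⟨n, hn⟩ := Int.eq_ofNat_of_zero_le (show 0 ≤ -k - 1 by omega)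
    obtain rfl : k = -((n + 1 : ℕ) : ℤ) := by push_cast; omega
    rw [show -((n + 1 : ℕ) : ℤ) + 1 = -(n : ℤ) by push_cast; ring, cpoch_neg, cpoch_neg, rf_succ']
    have h1 := rf_ne hc (-n) n
    have h2 : c - ((n : ℂ) + 1) ≠ 0 := by
      have := hc (n + 1)
      push_cast at this
      exact sub_ne_zero.2 this
    push_cast at h1 ⊢
    rw [← sub_eq_add_neg] at h1
    rw [show c - ((n : ℂ) + 1) + 1 = c - n by ring]
    rw [mul_inv, show c + -((n:ℂ) + 1) = c - (n + 1) by ring]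
    field_simp

lemma cpoch_add {c : ℂ} (hc : ∀ n : ℤ, c ≠ (n : ℂ)) (k : ℤ) (n : ℕ) :
    cpoch c (k + n) = cpoch c k * rf (c + k) n := by
  induction n with
  | zero => simp [rf_zero]
  | succ n ih =>
    rw [rf_succ, ← mul_assoc, ← ih]
    push_cast
    rw [← add_assoc, cpoch_succ hc]
    push_cast; ring

lemma sum_pascal (n : ℕ) (f : ℕ → ℂ) :
    ∑ m ∈ range (n + 2), ((n + 1).choose m : ℂ) * f m =
      ∑ m ∈ range (n + 1), (n.choose m : ℂ) * (f m + f (m + 1)) := by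
  rw [Finset.sum_range_succ']
  simp only [Nat.choose_succ_succ, mul_add, Finset.sum_add_distrib, Nat.cast_add, add_mul]
  have h : ∑ m ∈ range (n + 1), (n.choose m : ℂ) * f m =
      ∑ m ∈ range (n + 1), (n.choose (m + 1) : ℂ) * f (m + 1) + f 0 := by
    have := Finset.sum_range_succ' (fun m => (n.choose m : ℂ) * f m) (n + 1)
    rw [Finset.sum_range_succ] at this
    simpa using this
  rw [h]; simp; ring

/-- Chu–Vandermonde, first form. -/
lemma vander1 (Y : ℕ) (A C : ℂ) :
    ∑ m ∈ range (Y + 1), (Y.choose m : ℂ) * ((-1) ^ m * rf A m * rf (C + m) (Y - m)) =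
      rf (C - A) Y := by
  induction Y generalizing C with
  | zero => simp [rf_zero]
  | succ Y ih =>
    rw [sum_pascal, rf_succ', show C - A + 1 = (C + 1) - A by ring, ← ih, Finset.mul_sum]
    refine Finset.sum_congr rfl fun m hm => ?_
    obtain ⟨r, rfl⟩ := Nat.exists_eq_add_of_le (Nat.lt_succ_iff.1 (Finset.mem_range.1 hm))
    rw [show m + r + 1 - m = r + 1 by omega, show m + r + 1 - (m + 1) = r by omega,
      show m + r - m = r by omega, rf_succ', rf_succ]
    push_cast
    rw [show C + ((m : ℂ) + 1) = C + 1 + m by ring, show C + (m : ℂ) + 1 = C + 1 + m by ring]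
    ring

/-- Chu–Vandermonde, second form. -/
lemma vander2 (Z : ℕ) (B : ℂ) (q : ℕ) :
    ∑ l ∈ range (Z + 1), (Z.choose l : ℂ) *
      (if l ≤ q then (-1) ^ l * rf B (q - l) / ((q - l).factorial : ℂ) else 0) =
      rf (B - Z) q / (q.factorial : ℂ) := by
  induction Z generalizing q with
  | zero => simp
  | succ Z ih =>
    rw [sum_pascal]
    simp only [mul_add, Finset.sum_add_distrib]
    rw [ih]
    cases q with
    | zero => simp [rf_zero]
    | succ q =>
      have e : ∀ l ∈ range (Z + 1), (Z.choose l : ℂ) *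
          (if l + 1 ≤ q + 1 then (-1) ^ (l + 1) * rf B (q + 1 - (l + 1)) /
            ((q + 1 - (l + 1)).factorial : ℂ) else 0) =
          - ((Z.choose l : ℂ) *
          (if l ≤ q then (-1) ^ l * rf B (q - l) / ((q - l).factorial : ℂ) else 0)) := by
        intro l _
        rw [Nat.add_sub_add_right]
        simp only [Nat.add_le_add_iff_right]
        split_ifs
        · ring
        · simp
      rw [Finset.sum_congr rfl e, Finset.sum_neg_distrib, ih, rf_succ, rf_succ', Nat.factorial_succ]
      have := fact_ne q
      have h2 : (q : ℂ) + 1 ≠ 0 := by exact_mod_cast Nat.succ_ne_zero q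
      push_cast
      rw [show B - ((Z : ℂ) + 1) + 1 = B - Z by ring]
      field_simp
      ring

lemma saal_partial (a b c : ℂ) (X Q : ℕ) (hQ : Q ≤ X) :
    ∑ q ∈ range (Q + 1),
      (((X + 1).choose q : ℂ) * (rf a q * rf b q * rf (c - a - b) (X + 1 - q) *
          rf (c + q) (X + 1 - q)) -
        (c - a + X) * (c - b + X) * ((X.choose q : ℂ) * (rf a q * rf b q *
          rf (c - a - b) (X - q) * rf (c + q) (X - q)))) =
      - ((X.choose Q : ℂ) * (rf a (Q + 1) * rf b (Q + 1) * rf (c - a - b) (X - Q) *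
          rf (c + Q) (X - Q))) := by
  induction Q with
  | zero =>
    simp [rf_zero, rf_succ]
    ring
  | succ Q ih =>
    rw [Finset.sum_range_succ, ih (by omega)]
    obtain ⟨r, rfl⟩ := Nat.exists_eq_add_of_le hQ
    have h1 : ((Q + 1 + r).choose (Q + 1) : ℂ) * (Q + 1) = (Q + 1 + r).choose Q * (r + 1) := by
      have := Nat.choose_succ_right_eq (Q + 1 + r) Q
      rw [show Q + 1 + r - Q = r + 1 by omega] at this
      exact_mod_cast this
    have h2 : ((Q + 1 + r + 1).choose (Q + 1) : ℂ) =
        (Q + 1 + r).choose Q + (Q + 1 + r).choose (Q + 1) := by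
      rw [Nat.choose_succ_succ]; push_cast; ring
    rw [h2]
    have hr : (r : ℂ) + 1 ≠ 0 := by exact_mod_cast Nat.succ_ne_zero r
    have h3 : ((Q + 1 + r).choose Q : ℂ) = ((Q + 1 + r).choose (Q + 1) : ℂ) * (Q + 1) / (r + 1) := by
      rw [h1]; field_simp
    rw [h3, show Q + 1 + r + 1 - (Q + 1) = r + 1 by omega, show Q + 1 + r - (Q + 1) = r by omega,
      show Q + 1 + r - Q = r + 1 by omega, rf_succ' (c + Q), rf_succ _ r, rf_succ _ r,
      rf_succ a (Q + 1), rf_succ b (Q + 1)]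
    push_cast
    rw [show c + ((Q : ℂ) + 1) = c + Q + 1 by ring]
    field_simp
    ring

/-- Pfaff–Saalschütz. -/
lemma saal (a b c : ℂ) (X : ℕ) :
    ∑ q ∈ range (X + 1), ((X.choose q : ℂ) * (rf a q * rf b q *
          rf (c - a - b) (X - q) * rf (c + q) (X - q))) = rf (c - a) X * rf (c - b) X := by
  induction X with
  | zero => simp [rf_zero]
  | succ X ih =>
    have h := saal_partial a b c X X le_rfl
    rw [Finset.sum_sub_distrib, ← Finset.mul_sum, ih] at h
    rw [Finset.sum_range_succ, rf_succ (c - a), rf_succ (c - b)]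
    simp [rf_zero] at h ⊢
    linear_combination h

lemma term_eq (α β γ : ℂ) (hαβ : ∀ n : ℤ, α + β ≠ (n : ℂ)) (i j k l m p : ℕ) :
    (-1 : ℂ) ^ (i + j + k + l + m) *
            (cpoch β ((p + m : ℕ) : ℤ) * cpoch (α + β - γ) ((p + m : ℕ) : ℤ) /
              (((p + m).factorial : ℂ) * cpoch (α + β) ((p + m : ℕ) : ℤ))) *
            genBinom (β - γ) i * genBinom (-β - ((p + m : ℕ) : ℂ)) j *
            genBinom (α + β + ((p + m : ℕ) : ℂ) - 1) k *
            genBinom (γ - α - β - ((p + m : ℕ) : ℂ)) l *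
            genBinom ((p + m : ℕ) : ℂ) m =
    (-1) ^ (k + m) * rf β (p + m + j) * rf (γ - β) i * rf (α + β - γ) (p + m + l) /
      (cpoch (α + β) ((p : ℤ) + m - k) * (p.factorial * i.factorial * m.factorial * j.factorial *
        l.factorial * k.factorial)) := by
  have hi := genBinom_neg (β - γ) i
  have hj := genBinom_neg (-β - ((p + m : ℕ) : ℂ)) j
  have hl := genBinom_neg (γ - α - β - ((p + m : ℕ) : ℂ)) l
  have hk : cpoch (α + β) ((p + m : ℕ) : ℤ) = cpoch (α + β) ((p : ℤ) + m - k) *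
      (genBinom (α + β + ((p + m : ℕ) : ℂ) - 1) k * k.factorial) := by
    have := cpoch_add hαβ ((p : ℤ) + m - k) k
    rw [show (p : ℤ) + m - k + k = ((p + m : ℕ) : ℤ) by push_cast; ring] at this
    rw [this, genBinom_rf, div_mul_cancel₀ _ (fact_ne k)]
    congr 2
    push_cast; ring
  rw [show -(β - γ) = γ - β by ring] at hi
  rw [show -(-β - ((p + m : ℕ) : ℂ)) = β + (p + m : ℕ) by ring] at hj
  rw [show -(γ - α - β - ((p + m : ℕ) : ℂ)) = α + β - γ + (p + m : ℕ) by ring] at hl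
  have hne := cpoch_ne hαβ ((p + m : ℕ) : ℤ)
  have hne2 := cpoch_ne hαβ ((p : ℤ) + m - k)
  have hg : genBinom (α + β + ((p + m : ℕ) : ℂ) - 1) k ≠ 0 := by
    intro h; rw [h] at hk; simp at hk; exact hne hk
  rw [rf_add β, rf_add (α + β - γ), genBinom_nat, cpoch_nat β, cpoch_nat (α + β - γ), hk]
  have e : ∀ (A B C D E F : ℂ), (-1 : ℂ) ^ (i + j + k + l + m) * A * B * C * D * E * F =
    (-1) ^ (k + m) * A * ((-1) ^ i * B) * ((-1) ^ j * C) * D * ((-1) ^ l * E) * F := by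
    intros; ring
  rw [e, hi, hj, hl]
  have := fact_ne p
  have := fact_ne m
  have := fact_ne (p + m)
  have := fact_ne k
  have := fact_ne i
  have := fact_ne j
  have := fact_ne l
  generalize genBinom (α + β + ((p + m : ℕ) : ℂ) - 1) k = g at *
  field_simp

lemma choose_fact (Y m : ℕ) (h : m ≤ Y) :
    (Y.choose m : ℂ) * (m.factorial * (Y - m).factorial) = Y.factorial := by
  rw [← mul_assoc]
  exact_mod_cast Nat.choose_mul_factorial_mul_factorial h

lemma sum_m (a c : ℂ) (hc : ∀ n : ℤ, c ≠ (n : ℂ)) (q Z Y : ℕ) :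
    ∑ m ∈ range (Y + 1), (Y.choose m : ℂ) *
      ((-1) ^ m * rf a (q + m) / cpoch c ((q : ℤ) + m - Z)) =
    rf a q * rf (c - a - Z) Y / cpoch c ((q : ℤ) + Y - Z) := by
  rw [eq_div_iff (cpoch_ne hc _), Finset.sum_mul]
  have hv := vander1 Y (a + q) (c + q - Z)
  rw [show c + (q : ℂ) - Z - (a + q) = c - a - Z by ring] at hv
  rw [← hv, Finset.mul_sum]
  refine Finset.sum_congr rfl fun m hm => ?_
  have hm : m ≤ Y := Nat.lt_succ_iff.1 (Finset.mem_range.1 hm)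
  have h := cpoch_add hc ((q : ℤ) + m - Z) (Y - m)
  rw [show (q : ℤ) + m - Z + ((Y - m : ℕ) : ℤ) = (q : ℤ) + Y - Z by omega] at h
  rw [h, rf_add]
  have hne := cpoch_ne hc ((q : ℤ) + m - Z)
  push_cast
  rw [show c + ((q : ℂ) + m - Z) = c + q - Z + m by ring]
  field_simp

lemma sum_q (a b c e : ℂ) (hc : ∀ n : ℤ, c ≠ (n : ℂ)) (d : ℤ) (he : e = c + d - a - b) (X : ℕ) :
    ∑ q ∈ range (X + 1), rf a q * rf b q * rf e (X - q) /
      (q.factorial * (X - q).factorial * cpoch c (d + q)) =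
    rf (c + d - a) X * rf (c + d - b) X / (X.factorial * cpoch c (d + X)) := by
  subst he
  rw [eq_div_iff (mul_ne_zero (fact_ne _) (cpoch_ne hc _)), Finset.sum_mul, ← saal]
  refine Finset.sum_congr rfl fun q hq => ?_
  have hq : q ≤ X := Nat.lt_succ_iff.1 (Finset.mem_range.1 hq)
  have h := cpoch_add hc (d + q) (X - q)
  rw [show d + (q : ℤ) + ((X - q : ℕ) : ℤ) = d + X by omega] at h
  rw [h, ← choose_fact X q hq]
  have hne := cpoch_ne hc (d + q)
  have := fact_ne q
  have := fact_ne (X - q)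
  push_cast
  rw [← add_assoc]
  field_simp

lemma triple_sum (α β γ : ℂ)
    (hαβ : ∀ n : ℤ, α + β ≠ (n : ℂ)) (hγ : ∀ n : ℤ, γ ≠ (n : ℂ)) (X Y Z : ℕ) :
    ∑ q ∈ range (X + 1), ∑ l ∈ range (Z + 1), ∑ m ∈ range (Y + 1),
      (if l ≤ q then
      (-1) ^ (Z - l + m) * rf β (q - l + Y) * rf (γ - β) (X - q) * rf (α + β - γ) (q + m) /
      (cpoch (α + β) ((q : ℤ) + m - Z) * ((q - l).factorial * (X - q).factorial * m.factorial *
        (Y - m).factorial * l.factorial * (Z - l).factorial)) else 0) =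
    cpoch α (X : ℤ) * cpoch β (Y : ℤ) * cpoch (1 - γ) (Z : ℤ) *
        cpoch γ ((X : ℤ) + (Y : ℤ) - (Z : ℤ)) /
      ((X.factorial : ℂ) * (Y.factorial : ℂ) * (Z.factorial : ℂ) *
        cpoch (α + β) ((X : ℤ) + (Y : ℤ) - (Z : ℤ))) := by
  have hY := fact_ne Y
  have hZ := fact_ne Z
  have step : ∀ q ∈ range (X + 1), ∑ l ∈ range (Z + 1), ∑ m ∈ range (Y + 1),
      (if l ≤ q then
      (-1) ^ (Z - l + m) * rf β (q - l + Y) * rf (γ - β) (X - q) * rf (α + β - γ) (q + m) /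
      (cpoch (α + β) ((q : ℤ) + m - Z) * ((q - l).factorial * (X - q).factorial * m.factorial *
        (Y - m).factorial * l.factorial * (Z - l).factorial)) else 0) =
      (-1) ^ Z * rf β Y * rf (γ - Z) Y / (Y.factorial * Z.factorial) *
      (rf (α + β - γ) q * rf (β + Y - Z) q * rf (γ - β) (X - q) /
      (q.factorial * (X - q).factorial * cpoch (α + β) (((Y : ℤ) - Z) + q))) := by
    intro q _
    have h2 := vander2 Z (β + Y) q
    have h1 := sum_m (α + β - γ) (α + β) hαβ q Z Y
    have e : ∀ l ∈ range (Z + 1), ∑ m ∈ range (Y + 1),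
      (if l ≤ q then
      (-1) ^ (Z - l + m) * rf β (q - l + Y) * rf (γ - β) (X - q) * rf (α + β - γ) (q + m) /
      (cpoch (α + β) ((q : ℤ) + m - Z) * ((q - l).factorial * (X - q).factorial * m.factorial *
        (Y - m).factorial * l.factorial * (Z - l).factorial)) else 0) =
      (-1) ^ Z * rf β Y * rf (γ - β) (X - q) / (Y.factorial * Z.factorial * (X - q).factorial) *
      (rf (α + β - γ) q * rf (α + β - (α + β - γ) - Z) Y / cpoch (α + β) ((q : ℤ) + Y - Z)) *
      ((Z.choose l : ℂ) *
      (if l ≤ q then (-1) ^ l * rf (β + Y) (q - l) / ((q - l).factorial : ℂ) else 0)) := by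
      intro l hl
      have hl : l ≤ Z := Nat.lt_succ_iff.1 (Finset.mem_range.1 hl)
      by_cases hlq : l ≤ q
      · simp only [if_pos hlq]
        rw [← h1, Finset.mul_sum, Finset.sum_mul]
        refine Finset.sum_congr rfl fun m hm => ?_
        have hm : m ≤ Y := Nat.lt_succ_iff.1 (Finset.mem_range.1 hm)
        have hne := cpoch_ne hαβ ((q : ℤ) + m - Z)
        have hp : (-1 : ℂ) ^ (Z - l + m) = (-1) ^ Z * (-1) ^ l * (-1) ^ m := by
          obtain ⟨k, rfl⟩ := Nat.exists_eq_add_of_le hl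
          rw [Nat.add_sub_cancel_left, pow_add, pow_add]
          have : ((-1 : ℂ) ^ l) * (-1) ^ l = 1 := by rw [← mul_pow]; simp
          linear_combination (-(-1 : ℂ) ^ k * (-1) ^ m) * this
        rw [hp, add_comm (q - l) Y, rf_add β, ← choose_fact Y m hm, ← choose_fact Z l hl]
        have := fact_ne m
        have := fact_ne l
        have := fact_ne (Y - m)
        have := fact_ne (Z - l)
        have := fact_ne (X - q)
        have := fact_ne (q - l)
        have hc1 : (Y.choose m : ℂ) ≠ 0 := by exact_mod_cast (Nat.choose_pos hm).ne'
        have hc2 : (Z.choose l : ℂ) ≠ 0 := by exact_mod_cast (Nat.choose_pos hl).ne'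
        field_simp
      · simp [hlq]
    rw [Finset.sum_congr rfl e, ← Finset.mul_sum, h2,
      show α + β - (α + β - γ) = γ by ring, show (q : ℤ) + Y - Z = (Y : ℤ) - Z + q by ring]
    have := fact_ne q
    have := fact_ne (X - q)
    have hne := cpoch_ne hαβ ((Y : ℤ) - Z + q)
    field_simp
  rw [Finset.sum_congr rfl step, ← Finset.mul_sum,
    sum_q _ _ _ _ hαβ ((Y : ℤ) - Z) (by push_cast; ring) X]
  push_cast
  rw [show α + β + ((Y : ℂ) - Z) - (α + β - γ) = γ - Z + Y by ring,
    show α + β + ((Y : ℂ) - Z) - (β + Y - Z) = α by ring,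
    show (Y : ℤ) - Z + X = (X : ℤ) + Y - Z by ring, cpoch_nat, cpoch_nat, cpoch_nat]
  have hg : (-1) ^ Z * (rf (γ - Z) Y * rf (γ - Z + Y) X) =
      rf (1 - γ) Z * cpoch γ ((X : ℤ) + Y - Z) := by
    have h := cpoch_add hγ (-(Z : ℤ)) (Y + X)
    rw [cpoch_neg, rf_add] at h
    push_cast at h
    rw [show -(Z : ℤ) + (Y + X) = (X : ℤ) + Y - Z by ring, ← sub_eq_add_neg] at h
    rw [h, ← rf_reflect]
    have := rf_ne hγ (-Z) Z
    push_cast at this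
    rw [← sub_eq_add_neg] at this
    field_simp
  have hne := cpoch_ne hαβ ((X : ℤ) + Y - Z)
  have := fact_ne X
  field_simp
  linear_combination (rf β Y * rf α X) * hg

theorem ggr_coefficient_identity_first_form (α β γ : ℂ)
    (hαβ : ∀ n : ℤ, α + β ≠ (n : ℂ)) (hγ : ∀ n : ℤ, γ ≠ (n : ℂ)) (X Y Z : ℕ) :
    (∑' t : ℕ × ℕ × ℕ × ℕ × ℕ × ℕ,
      (fun (i j k l m n : ℕ) =>
        if i + l + n = X + m ∧ j + m = Y ∧ k + l = Z then
          (-1 : ℂ) ^ (i + j + k + l + m) *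
            (cpoch β (n : ℤ) * cpoch (α + β - γ) (n : ℤ) /
              ((n.factorial : ℂ) * cpoch (α + β) (n : ℤ))) *
            genBinom (β - γ) i * genBinom (-β - (n : ℂ)) j *
            genBinom (α + β + (n : ℂ) - 1) k * genBinom (γ - α - β - (n : ℂ)) l *
            genBinom (n : ℂ) m
        else 0) t.1 t.2.1 t.2.2.1 t.2.2.2.1 t.2.2.2.2.1 t.2.2.2.2.2) =
    cpoch α (X : ℤ) * cpoch β (Y : ℤ) * cpoch (1 - γ) (Z : ℤ) *
        cpoch γ ((X : ℤ) + (Y : ℤ) - (Z : ℤ)) /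
      ((X.factorial : ℂ) * (Y.factorial : ℂ) * (Z.factorial : ℂ) *
        cpoch (α + β) ((X : ℤ) + (Y : ℤ) - (Z : ℤ))) := by
  rw [← triple_sum α β γ hαβ hγ X Y Z]
  let φ : ℕ × ℕ × ℕ → ℕ × ℕ × ℕ × ℕ × ℕ × ℕ := fun t =>
    (X - t.1, Y - t.2.2, Z - t.2.1, t.2.1, t.2.2, t.1 - t.2.1 + t.2.2)
  let S : Finset (ℕ × ℕ × ℕ) :=
    (range (X + 1) ×ˢ range (Z + 1) ×ˢ range (Y + 1)).filter (fun t => t.2.1 ≤ t.1)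
  rw [tsum_eq_sum (s := S.image φ)]
  · rw [Finset.sum_image]
    · simp only [S]
      rw [Finset.sum_filter, Finset.sum_product]
      refine Finset.sum_congr rfl fun q hq => ?_
      rw [Finset.sum_product]
      refine Finset.sum_congr rfl fun l hl => ?_
      refine Finset.sum_congr rfl fun m hm => ?_
      rw [Finset.mem_range] at hq hl hm
      by_cases hlq : l ≤ q
      · simp only [φ, if_pos hlq]
        rw [if_pos (by omega), term_eq α β γ hαβ]
        rw [show q - l + m + (Y - m) = q - l + Y by omega, show q - l + m + l = q + m by omega,
          show ((q - l : ℕ) : ℤ) + m - ((Z - l : ℕ) : ℤ) = (q : ℤ) + m - Z by omega]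
      · simp only [if_neg hlq]
    · rintro ⟨q, l, m⟩ h1 ⟨q', l', m'⟩ h2 h
      simp only [S, Finset.coe_filter, Finset.mem_product, Finset.mem_range, Set.mem_ofPred_eq] at h1 h2
      simp only [φ, Prod.mk.injEq] at h ⊢
      omega
  · rintro ⟨i, j, k, l, m, n⟩ ht
    by_cases hc : i + l + n = X + m ∧ j + m = Y ∧ k + l = Z
    · simp only [if_pos hc]
      by_cases hnm : n < m
      · rw [genBinom_zero_of_lt hnm, mul_zero]
      · exfalso
        apply ht
        rw [Finset.mem_image]
        refine ⟨(X - i, l, m), ?_, ?_⟩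
        · simp only [S, Finset.mem_filter, Finset.mem_product, Finset.mem_range]
          omega
        · simp only [φ, Prod.mk.injEq, true_and]
          omega
    · simp only [if_neg hc]
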